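/- Let ρ be a positive definite density matrix and X a nonzero positive semidefinite matrix of the same size. Let J ⊆ ℝ be an open interval with 0 ∉ J, and let f, g : J → ℝ be differentiable functions satisfying x·g′(x) = g(x) and x·f′(x)·g(x) = −1 for all x ∈ J. Then the function x ↦ (1/x)·log Tr[(X ρ^{f(x)} X)^{g(x)}] is monotonically nondecreasing on J. -/

import Mathlib

open scoped Kronecker ComplexOrder
open Matrix

/-- Real power of a (Hermitian, in practice positive semidefinite) matrix, defined spectrally:
positive eigenvalues are raised to the power `t`, zero (and negative) eigenvalues are sent to `0`. -/
noncomputable def matPow {n : Type*} [Fintype n] [DecidableEq n]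
    (M : Matrix n n ℂ) (t : ℝ) : Matrix n n ℂ :=
  if hM : M.IsHermitian then
    (hM.eigenvectorUnitary : Matrix n n ℂ) *
      Matrix.diagonal (fun i =>
        ((if 0 < hM.eigenvalues i then (hM.eigenvalues i) ^ t else 0 : ℝ) : ℂ)) *
      (star (hM.eigenvectorUnitary : Matrix n n ℂ))
  else 0

/-- Partial trace over the first tensor factor. -/
noncomputable def ptraceFst {m n : Type*} [Fintype m] [Fintype n]
    (M : Matrix (m × n) (m × n) ℂ) : Matrix n n ℂ :=
  Matrix.of fun j j' => ∑ i, M (i, j) (i, j')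

/-- Partial trace over the second tensor factor. -/
noncomputable def ptraceSnd {m n : Type*} [Fintype m] [Fintype n]
    (M : Matrix (m × n) (m × n) ℂ) : Matrix m m ℂ :=
  Matrix.of fun i i' => ∑ j, M (i, j) (i', j)

/-- A density matrix: positive semidefinite with unit trace. -/
def IsDensity {n : Type*} [Fintype n] [DecidableEq n] (ρ : Matrix n n ℂ) : Prop :=
  ρ.PosSemidef ∧ ρ.trace = 1

lemma h18_neg {p : ℝ} (hp : p ≤ 0) : ConvexOn ℝ (Set.Ioi 0) (fun x : ℝ => x ^ p) := by
  have h1 : ConvexOn ℝ (Set.Ioi (0:ℝ)) (fun x => (-p) • (-Real.log) x) :=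
    (strictConcaveOn_log_Ioi.concaveOn.neg).smul (by linarith)
  have h2 : ConvexOn ℝ (Set.Ioi (0:ℝ)) (fun x => Real.exp ((-p) • (-Real.log) x)) := by
    refine ⟨convex_Ioi 0, ?_⟩
    intro x hx y hy a b ha hb hab
    have := h1.2 hx hy ha hb hab
    refine (Real.exp_le_exp.2 this).trans ?_
    exact convexOn_exp.2 (Set.mem_univ _) (Set.mem_univ _) ha hb hab
  refine h2.congr ?_
  intro x hx
  simp only [Real.rpow_def_of_pos (Set.mem_Ioi.1 hx)]
  simp [mul_comm]

lemma h18_cvx {p : ℝ} (hp : p ≤ 0 ∨ 1 ≤ p) : ConvexOn ℝ (Set.Ioi 0) (fun x : ℝ => x ^ p) := by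
  rcases hp with hp | hp
  · exact h18_neg hp
  · exact (convexOn_rpow hp).subset Set.Ioi_subset_Ici_self (convex_Ioi 0)

lemma h18_ccv {p : ℝ} (h0 : 0 ≤ p) (h1 : p ≤ 1) :
    ConcaveOn ℝ (Set.Ioi 0) (fun x : ℝ => x ^ p) :=
  (Real.concaveOn_rpow h0 h1).subset Set.Ioi_subset_Ici_self (convex_Ioi 0)

lemma h18_jpos {ι : Type*} [Fintype ι] {w z : ι → ℝ} (hw : ∀ i, 0 ≤ w i) (hw1 : ∑ i, w i = 1)
    (hz : ∀ i, 0 < z i) : 0 < ∑ i, w i * z i := by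
  have := (convex_Ioi (0:ℝ)).sum_mem (t := Finset.univ) (w := w) (z := z) (fun i _ => hw i) hw1
    (fun i _ => hz i)
  simpa using this

lemma h18_jle {ι : Type*} [Fintype ι] {w z : ι → ℝ} (hw : ∀ i, 0 ≤ w i) (hw1 : ∑ i, w i = 1)
    (hz : ∀ i, 0 < z i) {p : ℝ} (hp : p ≤ 0 ∨ 1 ≤ p) :
    (∑ i, w i * z i) ^ p ≤ ∑ i, w i * z i ^ p := by
  have := (h18_cvx hp).map_sum_le (t := Finset.univ) (w := w) (p := z) (fun i _ => hw i) hw1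
    (fun i _ => hz i)
  simpa using this

lemma h18_jge {ι : Type*} [Fintype ι] {w z : ι → ℝ} (hw : ∀ i, 0 ≤ w i) (hw1 : ∑ i, w i = 1)
    (hz : ∀ i, 0 < z i) {p : ℝ} (h0 : 0 ≤ p) (h1 : p ≤ 1) :
    ∑ i, w i * z i ^ p ≤ (∑ i, w i * z i) ^ p := by
  have := (h18_ccv h0 h1).le_map_sum (t := Finset.univ) (w := w) (p := z) (fun i _ => hw i) hw1
    (fun i _ => hz i)
  simpa using this

/-- rewriting identity -/
lemma h18_id {l q T : ℝ} (hl : 0 < l) (hq : 0 < q) (hT : 0 < T) {s s0 : ℝ} (hs : s ≠ 0)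
    (hs0 : s0 ≠ 0) :
    (l * q ^ (s - s0)) ^ (1 / s) =
      T ^ (s0 / s) * ((l ^ (1 / s0) / T) * (q / (l ^ (1 / s0) / T)) ^ (1 - s0 / s)) := by
  set a := l ^ (1 / s0) with ha
  have hap : 0 < a := Real.rpow_pos_of_pos hl _
  have hla : l = a ^ s0 := by
    rw [ha, ← Real.rpow_mul hl.le, one_div_mul_cancel hs0, Real.rpow_one]
  have hsp : 0 < a / T := div_pos hap hT
  rw [hla, Real.mul_rpow (by positivity) (by positivity), ← Real.rpow_mul hap.le,
    ← Real.rpow_mul hq.le, Real.div_rpow hq.le hsp.le, Real.rpow_sub hsp, Real.rpow_one,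
    Real.div_rpow hap.le hT.le]
  have e1 : s0 * (1 / s) = s0 / s := by ring
  have e2 : (s - s0) * (1 / s) = 1 - s0 / s := by field_simp
  rw [e1, e2]
  have := Real.rpow_pos_of_pos hT (s0 / s)
  have := Real.rpow_pos_of_pos hap (s0 / s)
  field_simp

section h18sc
variable {ι κ η : Type*} [Fintype ι] [Fintype κ] [Fintype η]

lemma h18_sc1 (l : ι → ℝ) (m : η → ℝ) (D : ι → η → ℝ) (P : ι → κ → ℝ) (r : κ → ℝ)
    (s s0 : ℝ) [Nonempty ι]
    (hl : ∀ i, 0 < l i) (hm : ∀ j, 0 < m j) (hD : ∀ i j, 0 ≤ D i j)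
    (hD1 : ∀ i, ∑ j, D i j = 1) (hD2 : ∀ j, ∑ i, D i j = 1)
    (hP : ∀ i k, 0 ≤ P i k) (hP1 : ∀ i, ∑ k, P i k = 1) (hP2 : ∀ k, ∑ i, P i k ≤ 1)
    (hr : ∀ k, 0 < r k) (hr1 : ∑ k, r k = 1)
    (hb : ∀ i, ∑ j, D i j * m j = l i * ∑ k, P i k * r k ^ (s - s0))
    (hs0 : s0 ≠ 0) :
    (((0 < s ∧ s ≤ 1 ∧ s ≤ s0) ∨ (s < 0 ∧ s0 ≤ s ∧ s ≤ s0 + 1)) →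
      (∑ i, l i ^ (1 / s0)) ^ (s0 / s) ≤ ∑ j, m j ^ (1 / s)) ∧
    ((0 < s0 ∧ 1 ≤ s ∧ s0 ≤ s ∧ s ≤ s0 + 1) →
      ∑ j, m j ^ (1 / s) ≤ (∑ i, l i ^ (1 / s0)) ^ (s0 / s)) := by
  set T := ∑ i, l i ^ (1 / s0) with hT
  have hTp : 0 < T := Finset.sum_pos (fun i _ => Real.rpow_pos_of_pos (hl i) _)
    Finset.univ_nonempty
  set q : ι → ℝ := fun i => ∑ k, P i k * r k with hq
  have hqp : ∀ i, 0 < q i := fun i => h18_jpos (hP i) (hP1 i) hr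
  have hq1 : ∑ i, q i ≤ 1 := by
    simp only [hq]
    rw [Finset.sum_comm, ← hr1]
    refine Finset.sum_le_sum fun k _ => ?_
    rw [← Finset.sum_mul]
    nlinarith [hP2 k, hr k]
  have hqs : 0 < ∑ i, q i := Finset.sum_pos (fun i _ => hqp i) Finset.univ_nonempty
  have hTr : ∑ j, m j ^ (1 / s) = ∑ i, ∑ j, D i j * m j ^ (1 / s) := by
    rw [Finset.sum_comm]
    refine Finset.sum_congr rfl fun j _ => ?_
    rw [← Finset.sum_mul, hD2, one_mul]
  set σ : ι → ℝ := fun i => l i ^ (1 / s0) / T with hσ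
  have hσp : ∀ i, 0 < σ i := fun i => div_pos (Real.rpow_pos_of_pos (hl i) _) hTp
  have hσ1 : ∑ i, σ i = 1 := by
    simp only [hσ]
    rw [← Finset.sum_div, ← hT, div_self hTp.ne']
  have hσq : ∑ i, σ i * (q i / σ i) = ∑ i, q i :=
    Finset.sum_congr rfl fun i _ => by rw [mul_div_cancel₀ _ (hσp i).ne']
  have hrp : ∀ k, 0 < r k ^ (s - s0) := fun k => Real.rpow_pos_of_pos (hr k) _
  have hBp : ∀ i, 0 < ∑ k, P i k * r k ^ (s - s0) := fun i => h18_jpos (hP i) (hP1 i) hrp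
  have hqrp : ∀ i, 0 < q i ^ (s - s0) := fun i => Real.rpow_pos_of_pos (hqp i) _
  constructor
  · intro hc
    have hs : s ≠ 0 := by rcases hc with h | h <;> [exact h.1.ne'; exact h.1.ne]
    have hp : 1 / s ≤ 0 ∨ 1 ≤ 1 / s := by
      rcases hc with h | h
      · right; rw [le_div_iff₀ h.1]; linarith [h.2.1]
      · left; exact div_nonpos_of_nonneg_of_nonpos zero_le_one h.1.le
    have hu : 1 - s0 / s ≤ 0 := by
      rcases hc with h | h
      · rw [sub_nonpos, le_div_iff₀ h.1]; linarith [h.2.2]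
      · rw [sub_nonpos, le_div_iff_of_neg h.1]; linarith [h.2.1]
    rw [hTr]
    have step : ∀ i, T ^ (s0 / s) * (σ i * (q i / σ i) ^ (1 - s0 / s)) ≤
        ∑ j, D i j * m j ^ (1 / s) := by
      intro i
      rw [← h18_id (hl i) (hqp i) hTp hs hs0]
      refine le_trans ?_ (h18_jle (hD i) (hD1 i) hm hp)
      rw [hb i]
      rcases hc with h | h
      · refine Real.rpow_le_rpow (mul_pos (hl i) (hqrp i)).le ?_ (by have := h.1; positivity)
        refine mul_le_mul_of_nonneg_left ?_ (hl i).le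
        exact h18_jle (hP i) (hP1 i) hr (Or.inl (by linarith [h.2.2]))
      · refine Real.rpow_le_rpow_of_nonpos (mul_pos (hl i) (hBp i)) ?_
          (div_nonpos_of_nonneg_of_nonpos zero_le_one h.1.le)
        refine mul_le_mul_of_nonneg_left ?_ (hl i).le
        exact h18_jge (hP i) (hP1 i) hr (by linarith [h.2.1]) (by linarith [h.2.2])
    refine le_trans ?_ (Finset.sum_le_sum fun i _ => step i)
    rw [← Finset.mul_sum]
    refine le_mul_of_one_le_right (Real.rpow_nonneg hTp.le _) ?_
    refine le_trans ?_ (h18_jle (fun i => (hσp i).le) hσ1 (fun i => div_pos (hqp i) (hσp i))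
      (Or.inl hu))
    rw [hσq]
    exact Real.one_le_rpow_of_pos_of_le_one_of_nonpos hqs hq1 hu
  · rintro ⟨h1, h2, h3, h4⟩
    have hsp : 0 < s := by linarith
    have hs : s ≠ 0 := hsp.ne'
    have hu : 0 ≤ 1 - s0 / s := by
      rw [sub_nonneg, div_le_iff₀ hsp]; linarith
    have hu' : 1 - s0 / s ≤ 1 := by
      have : 0 < s0 / s := by positivity
      linarith
    rw [hTr]
    have step : ∀ i, ∑ j, D i j * m j ^ (1 / s) ≤
        T ^ (s0 / s) * (σ i * (q i / σ i) ^ (1 - s0 / s)) := by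
      intro i
      rw [← h18_id (hl i) (hqp i) hTp hs hs0]
      refine le_trans (h18_jge (hD i) (hD1 i) hm (by positivity)
        (by rw [div_le_iff₀ hsp]; linarith)) ?_
      rw [hb i]
      refine Real.rpow_le_rpow (mul_pos (hl i) (hBp i)).le ?_ (by positivity)
      refine mul_le_mul_of_nonneg_left ?_ (hl i).le
      exact h18_jge (hP i) (hP1 i) hr (by linarith) (by linarith)
    refine le_trans (Finset.sum_le_sum fun i _ => step i) ?_
    rw [← Finset.mul_sum]
    refine mul_le_of_le_one_right (Real.rpow_nonneg hTp.le _) ?_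
    refine le_trans (h18_jge (fun i => (hσp i).le) hσ1 (fun i => div_pos (hqp i) (hσp i))
      hu hu') ?_
    rw [hσq]
    exact Real.rpow_le_one hqs.le hq1 hu

end h18sc

section h18mat
variable {n : Type*} [Fintype n] [DecidableEq n]

lemma h18_quad (Z : Matrix n n ℂ) (a : n → ℝ) (i : n) :
    (star Z * diagonal (fun k => (a k : ℂ)) * Z) i i
      = ((∑ k, a k * Complex.normSq (Z k i) : ℝ) : ℂ) := by
  rw [Matrix.mul_apply]
  simp only [Matrix.mul_diagonal, Matrix.star_apply]
  push_cast
  refine Finset.sum_congr rfl fun k _ => ?_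
  rw [Complex.normSq_eq_conj_mul_self]
  simp only [RCLike.star_def]
  ring

lemma h18_unit (W : Matrix n n ℂ) (h : star W * W = 1) (i : n) :
    ∑ k, Complex.normSq (W k i) = 1 := by
  have h2 := h18_quad W (fun _ => 1) i
  have h3 : (diagonal (fun _ : n => ((1:ℝ):ℂ))) = 1 := by simp
  rw [h3, mul_one, h] at h2
  simp only [Matrix.one_apply_eq, one_mul] at h2
  exact_mod_cast h2.symm

lemma h18_sub (l : n → ℝ) (hl : ∀ i, 0 ≤ l i) (F : n → ℝ) (hF : ∀ i, l i = 0 → F i = 0) :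
    ∑ i : {i // 0 < l i}, F i = ∑ i, F i := by
  rw [← Finset.sum_subtype (Finset.univ.filter fun i => 0 < l i) (by simp) F]
  refine Finset.sum_subset (Finset.subset_univ _) ?_
  intro i _ hi
  refine hF i (le_antisymm ?_ (hl i))
  simpa using hi

lemma h18_bessel (Z : Matrix n n ℂ) (a : n → ℝ) (ha : ∀ k, 0 < a k) (l : n → ℝ)
    (h : star Z * diagonal (fun k => (a k : ℂ)) * Z = diagonal (fun i => (l i : ℂ))) (k : n) :
    ∑ i : {i // 0 < l i}, a k * Complex.normSq (Z k i) / l i ≤ 1 := by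
  set v : {i // 0 < l i} → EuclideanSpace ℂ n := fun i =>
    WithLp.toLp 2 (fun k => ((Real.sqrt (a k) / Real.sqrt (l i) : ℝ) : ℂ) * Z k i) with hv
  have hon : Orthonormal ℂ v := by
    rw [orthonormal_iff_ite]
    intro i j
    have hij := congrFun (congrFun h i) j
    rw [Matrix.mul_apply] at hij
    simp only [Matrix.mul_diagonal, Matrix.star_apply, RCLike.star_def] at hij
    have e : inner ℂ (v i) (v j) =
        ((1 / (Real.sqrt (l i) * Real.sqrt (l j)) : ℝ) : ℂ) *
          ∑ x, (starRingEnd ℂ) (Z x i) * (a x : ℂ) * Z x j := by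
      rw [PiLp.inner_apply, Finset.mul_sum]
      refine Finset.sum_congr rfl fun x _ => ?_
      simp only [hv, RCLike.inner_apply, map_mul, Complex.conj_ofReal]
      have : (a x : ℂ) = (Real.sqrt (a x) : ℂ) * (Real.sqrt (a x) : ℂ) := by
        rw [← Complex.ofReal_mul, Real.mul_self_sqrt (ha x).le]
      rw [this]
      push_cast
      ring
    rw [e, hij]
    by_cases hh : i = j
    · subst hh
      rw [if_pos rfl, Matrix.diagonal_apply_eq, Real.mul_self_sqrt i.2.le, ← Complex.ofReal_mul,
        one_div_mul_cancel i.2.ne', Complex.ofReal_one]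
    · rw [if_neg hh, Matrix.diagonal_apply_ne _ (fun h' => hh (Subtype.ext h')), mul_zero]
  have := hon.sum_inner_products_le (EuclideanSpace.single k (1:ℂ)) (s := Finset.univ)
  simp only [EuclideanSpace.norm_single, norm_one, one_pow] at this
  refine le_trans (le_of_eq ?_) this
  refine Finset.sum_congr rfl fun i _ => ?_
  rw [EuclideanSpace.inner_single_right, one_mul, RCLike.norm_conj]
  simp only [hv, norm_mul, mul_pow, Complex.norm_real, Real.norm_eq_abs, sq_abs, div_pow,
    Real.sq_sqrt (ha k).le, Real.sq_sqrt i.2.le, Complex.normSq_eq_norm_sq]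
  ring

lemma h18_mat (Z W : Matrix n n ℂ) (r : n → ℝ) (hr : ∀ k, 0 < r k) (hr1 : ∑ k, r k = 1)
    (hW1 : star W * W = 1) (hW2 : W * star W = 1) (hZ : Z ≠ 0) (l m : n → ℝ) (d s s0 : ℝ)
    (h0 : star Z * diagonal (fun k => ((r k ^ (d + s0) : ℝ) : ℂ)) * Z =
      diagonal (fun i => (l i : ℂ)))
    (h1 : star (Z * star W) * diagonal (fun k => ((r k ^ (d + s) : ℝ) : ℂ)) * (Z * star W) =
      diagonal (fun i => (m i : ℂ)))
    (hs0 : s0 ≠ 0) :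
    (((0 < s ∧ s ≤ 1 ∧ s ≤ s0) ∨ (s < 0 ∧ s0 ≤ s ∧ s ≤ s0 + 1)) →
      (∑ i : {i // 0 < l i}, l i ^ (1 / s0)) ^ (s0 / s) ≤ ∑ j : {j // 0 < m j}, m j ^ (1 / s)) ∧
    ((0 < s0 ∧ 1 ≤ s ∧ s0 ≤ s ∧ s ≤ s0 + 1) →
      ∑ j : {j // 0 < m j}, m j ^ (1 / s) ≤
        (∑ i : {i // 0 < l i}, l i ^ (1 / s0)) ^ (s0 / s)) ∧
    0 < ∑ i : {i // 0 < l i}, l i ^ (1 / s0) := by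
  have key : ∀ (Y : Matrix n n ℂ) (c : n → ℝ) (t : ℝ),
      star Y * diagonal (fun k => ((r k ^ t : ℝ) : ℂ)) * Y = diagonal (fun i => (c i : ℂ)) →
      (∀ i, c i = ∑ k, r k ^ t * Complex.normSq (Y k i)) ∧ (∀ i, 0 ≤ c i) ∧
      (∀ i, c i = 0 → ∀ k, Y k i = 0) := by
    intro Y c t h
    have e : ∀ i, c i = ∑ k, r k ^ t * Complex.normSq (Y k i) := by
      intro i
      have := congrFun (congrFun h i) i
      rw [h18_quad, Matrix.diagonal_apply_eq] at this
      exact_mod_cast this.symm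
    have nn : ∀ i k, 0 ≤ r k ^ t * Complex.normSq (Y k i) := fun i k =>
      mul_nonneg (Real.rpow_nonneg (hr k).le _) (Complex.normSq_nonneg _)
    refine ⟨e, fun i => by rw [e]; exact Finset.sum_nonneg fun k _ => nn i k, ?_⟩
    intro i hi k
    rw [e, Finset.sum_eq_zero_iff_of_nonneg (fun k _ => nn i k)] at hi
    have := hi k (Finset.mem_univ _)
    rcases mul_eq_zero.1 this with h | h
    · exact absurd h (Real.rpow_pos_of_pos (hr k) t).ne'
    · exact Complex.normSq_eq_zero.1 h
  obtain ⟨l1, l2, l3⟩ := key _ _ _ h0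
  obtain ⟨m1, m2, m3⟩ := key _ _ _ h1
  set D0 := diagonal (fun k => ((r k ^ (d + s0) : ℝ) : ℂ)) with hD0
  set D1 := diagonal (fun k => ((r k ^ (d + s) : ℝ) : ℂ)) with hD1
  have w1 : ∀ i j, l i = 0 → 0 < m j → W j i = 0 := by
    intro i j hi hj
    have e : diagonal (fun i => (m i : ℂ)) * W = (W * star Z * D1) * Z := by
      rw [← h1, star_mul, star_star]
      simp only [mul_assoc, hW1, mul_one]
    have := congrFun (congrFun e j) i
    rw [Matrix.diagonal_mul, Matrix.mul_apply] at this
    simp only [l3 i hi, mul_zero, Finset.sum_const_zero] at this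
    rcases mul_eq_zero.1 this with h | h
    · exact absurd (by exact_mod_cast h) hj.ne'
    · exact h
  have w2 : ∀ i j, m j = 0 → 0 < l i → W j i = 0 := by
    intro i j hj hi
    have e : W * diagonal (fun i => (l i : ℂ)) = star (Z * star W) * (D0 * Z) := by
      rw [← h0, star_mul, star_star]
      simp only [mul_assoc]
    have := congrFun (congrFun e j) i
    rw [Matrix.mul_diagonal, Matrix.mul_apply] at this
    simp only [Matrix.star_apply, m3 j hj, star_zero, zero_mul, Finset.sum_const_zero] at this
    rcases mul_eq_zero.1 this with h | h
    · exact h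
    · exact absurd (by exact_mod_cast h) hi.ne'
  have hne : Nonempty {i // 0 < l i} := by
    by_contra hcon
    apply hZ
    ext k i
    refine l3 i ?_ k
    by_contra hi
    exact hcon ⟨⟨i, lt_of_le_of_ne (l2 i) (Ne.symm hi)⟩⟩
  have hbb : ∀ i, ∑ j, m j * Complex.normSq (W j i) =
      ∑ k, r k ^ (d + s) * Complex.normSq (Z k i) := by
    intro i
    have e : star W * diagonal (fun i => (m i : ℂ)) * W = star Z * D1 * Z := by
      rw [← h1, star_mul, star_star]
      simp only [mul_assoc, hW1, mul_one]
      rw [← mul_assoc, hW1, one_mul]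
    have := congrFun (congrFun e i) i
    rw [h18_quad, hD1, h18_quad] at this
    exact_mod_cast this
  have hpos : 0 < ∑ i : {i // 0 < l i}, l i ^ (1 / s0) :=
    Finset.sum_pos (fun i _ => Real.rpow_pos_of_pos i.2 _) Finset.univ_nonempty
  rw [← and_assoc]
  refine ⟨?_, hpos⟩
  refine h18_sc1 (fun i : {i // 0 < l i} => l i) (fun j : {j // 0 < m j} => m j)
    (fun i j => Complex.normSq (W j i))
    (fun i k => r k ^ (d + s0) * Complex.normSq (Z k i) / l i) r s s0
    (fun i => i.2) (fun j => j.2) (fun _ _ => Complex.normSq_nonneg _) ?_ ?_ ?_ ?_ ?_ hr hr1 ?_ hs0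
  · intro i
    rw [h18_sub m m2 (fun j => Complex.normSq (W j i))
      (fun j hj => by rw [w2 i j hj i.2, map_zero])]
    exact h18_unit W hW1 i
  · intro j
    rw [h18_sub l l2 (fun i => Complex.normSq (W j i))
      (fun i hi => by rw [w1 i j hi j.2, map_zero])]
    have := h18_unit (star W) (by rw [star_star]; exact hW2) j
    simpa [Matrix.star_apply] using this
  · intro i k
    exact div_nonneg (mul_nonneg (Real.rpow_nonneg (hr k).le _) (Complex.normSq_nonneg _)) i.2.le
  · intro i
    rw [← Finset.sum_div, ← l1, div_self i.2.ne']
  · intro k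
    exact h18_bessel Z _ (fun k => Real.rpow_pos_of_pos (hr k) _) l h0 k
  · intro i
    rw [h18_sub m m2 (fun j => Complex.normSq (W j i) * m j)
      (fun j hj => by rw [hj, mul_zero]), Finset.mul_sum]
    simp only [mul_comm _ (m _)]
    rw [hbb]
    refine Finset.sum_congr rfl fun k _ => ?_
    have : r k ^ (d + s) = r k ^ (d + s0) * r k ^ (s - s0) := by
      rw [← Real.rpow_add (hr k)]; congr 1; ring
    rw [this]
    have := i.2.ne'
    field_simp

end h18mat

section h18fin
variable {n : Type*} [Fintype n] [DecidableEq n]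

lemma h18_trace (M : Matrix n n ℂ) (hM : M.IsHermitian) (t : ℝ) :
    (Matrix.trace (matPow M t)).re = ∑ i : {i // 0 < hM.eigenvalues i}, hM.eigenvalues i ^ t := by
  have hu : star (hM.eigenvectorUnitary : Matrix n n ℂ) * (hM.eigenvectorUnitary : Matrix n n ℂ)
    = 1 := Unitary.coe_star_mul_self _
  rw [matPow, dif_pos hM, mul_assoc, Matrix.trace_mul_comm, mul_assoc, hu, mul_one,
    Matrix.trace_diagonal, ← Complex.ofReal_sum, Complex.ofReal_re, ← Finset.sum_filter]
  exact Finset.sum_subtype _ (by simp) _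

lemma h18_diag (M : Matrix n n ℂ) (hM : M.IsHermitian) :
    star (hM.eigenvectorUnitary : Matrix n n ℂ) * M * (hM.eigenvectorUnitary : Matrix n n ℂ)
      = diagonal (fun i => (hM.eigenvalues i : ℂ)) := by
  have := hM.conjStarAlgAut_star_eigenvectorUnitary
  rw [Unitary.conjStarAlgAut_star_apply] at this
  exact this

lemma h18_step (ρ X : Matrix n n ℂ) (hρ : ρ.PosDef) (hρtr : ρ.trace = 1)
    (hX : X.PosSemidef) (hX0 : X ≠ 0) (d s s0 : ℝ) (hs0 : s0 ≠ 0) (T : ℝ → ℝ)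
    (hT : ∀ s, T s = (Matrix.trace (matPow (X * matPow ρ (d + s) * X) (1 / s))).re) :
    (((0 < s ∧ s ≤ 1 ∧ s ≤ s0) ∨ (s < 0 ∧ s0 ≤ s ∧ s ≤ s0 + 1)) →
      (T s0) ^ (s0 / s) ≤ T s) ∧
    ((0 < s0 ∧ 1 ≤ s ∧ s0 ≤ s ∧ s ≤ s0 + 1) →
      T s ≤ (T s0) ^ (s0 / s)) ∧ 0 < T s0 := by
  have hρH := hρ.isHermitian
  have hXH : star X = X := hX.isHermitian
  set U := (hρH.eigenvectorUnitary : Matrix n n ℂ) with hU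
  set r := hρH.eigenvalues with hr
  have hrp : ∀ k, 0 < r k := fun k => hρ.eigenvalues_pos k
  have hU2 : U * star U = 1 := Unitary.coe_mul_star_self _
  have hr1 : ∑ k, r k = 1 := by
    have := hρH.trace_eq_sum_eigenvalues
    rw [hρtr] at this
    have h2 : ((∑ k, r k : ℝ) : ℂ) = 1 := by rw [this]; push_cast; rfl
    exact_mod_cast h2
  have hpow : ∀ t, matPow ρ t = U * diagonal (fun k => ((r k ^ t : ℝ) : ℂ)) * star U := by
    intro t
    rw [matPow, dif_pos hρH]
    simp only [← hr, hrp, if_true, ← hU]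
  have hMH : ∀ t, (X * matPow ρ t * X).IsHermitian := by
    intro t
    have : star (X * matPow ρ t * X) = X * matPow ρ t * X := by
      have hdd : star (diagonal (fun k => ((r k ^ t : ℝ) : ℂ)))
          = diagonal (fun k => ((r k ^ t : ℝ) : ℂ)) := by
        rw [Matrix.star_eq_conjTranspose, Matrix.diagonal_conjTranspose]
        congr 1
        ext k
        simp
      rw [hpow]
      simp only [star_mul, star_star, hXH, hdd, mul_assoc]
    exact this
  set E : ℝ → Matrix n n ℂ := fun t => ((hMH t).eigenvectorUnitary : Matrix n n ℂ) with hE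
  have hE1 : ∀ t, star (E t) * E t = 1 := fun t => Unitary.coe_star_mul_self _
  have hE2 : ∀ t, E t * star (E t) = 1 := fun t => Unitary.coe_mul_star_self _
  have hEd : ∀ t, star (star U * X * E t) * diagonal (fun k => ((r k ^ t : ℝ) : ℂ)) *
      (star U * X * E t) = diagonal (fun i => ((hMH t).eigenvalues i : ℂ)) := by
    intro t
    rw [← h18_diag _ (hMH t)]
    simp only [star_mul, star_star, hXH]
    have h3 : X * matPow ρ t * X = X * (U * diagonal (fun k => ((r k ^ t : ℝ) : ℂ)) * star U) * X := by
      rw [hpow]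
    refine Eq.trans ?_ (congrArg (fun A => star (E t) * A * E t) h3).symm
    simp only [mul_assoc]
  have main := h18_mat (star U * X * E (d + s0)) (star (E (d + s)) * E (d + s0)) r hrp hr1
    (by
      rw [star_mul, star_star, mul_assoc, ← mul_assoc (E (d + s)), hE2, one_mul, hE1])
    (by
      rw [star_mul, star_star, mul_assoc, ← mul_assoc (E (d + s0)), hE2, one_mul, hE1])
    (by
      intro h
      apply hX0
      have : X = U * (star U * X * E (d + s0)) * star (E (d + s0)) := by
        rw [mul_assoc, mul_assoc (star U * X), hE2, mul_one, ← mul_assoc, hU2, one_mul]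
      rw [this, h, mul_zero, zero_mul])
    (hMH (d + s0)).eigenvalues (hMH (d + s)).eigenvalues d s s0 (hEd _)
    (by
      have : star U * X * E (d + s0) * star (star (E (d + s)) * E (d + s0)) =
          star U * X * E (d + s) := by
        rw [star_mul, star_star, mul_assoc, ← mul_assoc (E (d + s0)), hE2, one_mul]
      rw [this]
      exact hEd _) hs0
  rw [hT, hT, h18_trace _ (hMH _), h18_trace _ (hMH _)]
  exact main

lemma h18_chain (F : ℝ → ℝ) (h : ∀ a b, (0 < a ∨ b < 0) → a ≤ b → b ≤ a + 1 → F b ≤ F a) :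
    ∀ a b, (0 < a ∨ b < 0) → a ≤ b → F b ≤ F a := by
  have : ∀ N : ℕ, ∀ a b : ℝ, (0 < a ∨ b < 0) → a ≤ b → b ≤ a + N → F b ≤ F a := by
    intro N
    induction N with
    | zero => intro a b hs h1 h2; exact h a b hs h1 (by simp at h2; linarith)
    | succ N ih =>
      intro a b hs h1 h2
      push_cast at h2
      by_cases hc : b ≤ a + 1
      · exact h a b hs h1 hc
      · push Not at hc
        refine (h (b - 1) b ?_ (by linarith) (by linarith)).trans
          (ih a (b - 1) ?_ (by linarith) (by linarith))
        · rcases hs with hs | hs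
          · left; linarith
          · right; exact hs
        · rcases hs with hs | hs
          · left; exact hs
          · right; linarith
  intro a b hs h1
  obtain ⟨N, hN⟩ := exists_nat_ge (b - a)
  exact this N a b hs h1 (by linarith)

lemma h18_anti (ρ X : Matrix n n ℂ) (hρ : ρ.PosDef) (hρtr : ρ.trace = 1)
    (hX : X.PosSemidef) (hX0 : X ≠ 0) (d : ℝ) (a b : ℝ) (hab : 0 < a ∨ b < 0) (h : a ≤ b) :
    b * Real.log ((Matrix.trace (matPow (X * matPow ρ (d + b) * X) (1 / b))).re) ≤
    a * Real.log ((Matrix.trace (matPow (X * matPow ρ (d + a) * X) (1 / a))).re) := by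
  set T : ℝ → ℝ := fun s => (Matrix.trace (matPow (X * matPow ρ (d + s) * X) (1 / s))).re with hT
  refine h18_chain (fun s => s * Real.log (T s)) ?_ a b hab h
  clear h hab a b
  intro a b hab h1 h2
  have st := fun s s0 hs0 => h18_step ρ X hρ hρtr hX hX0 d s s0 hs0 T (fun s => rfl)
  show b * Real.log (T b) ≤ a * Real.log (T a)
  rcases hab with ha | hb
  · have hb : 0 < b := by linarith
    have Ta := (st a a ha.ne').2.2
    have Tb := (st b b hb.ne').2.2
    by_cases hc : a ≤ 1
    · have := Real.log_le_log (Real.rpow_pos_of_pos Tb _)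
        ((st a b hb.ne').1 (Or.inl ⟨ha, hc, h1⟩))
      rw [Real.log_rpow Tb, div_mul_eq_mul_div, div_le_iff₀ ha] at this
      linarith
    · push Not at hc
      have := Real.log_le_log Tb ((st b a ha.ne').2.1 ⟨ha, by linarith, h1, h2⟩)
      rw [Real.log_rpow Ta, div_mul_eq_mul_div, le_div_iff₀ hb] at this
      linarith
  · have ha : a < 0 := by linarith
    have Ta := (st a a ha.ne).2.2
    have := Real.log_le_log (Real.rpow_pos_of_pos Ta _)
        ((st b a ha.ne).1 (Or.inr ⟨hb, h1, h2⟩))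
    rw [Real.log_rpow Ta, div_mul_eq_mul_div, div_le_iff_of_neg hb] at this
    linarith

end h18fin

/-- for a positive definite density matrix `ρ`, a nonzero positive
semidefinite `X`, an open interval `J ⊆ ℝ` with `0 ∉ J`, and differentiable functions
`f, g` on `J` satisfying `x·g′(x) = g(x)` and `x·f′(x)·g(x) = −1`, the function
`x ↦ (1/x)·log Tr[(X ρ^{f(x)} X)^{g(x)}]` is monotonically nondecreasing on `J`. -/
theorem stmt18 {n : Type*} [Fintype n] [DecidableEq n]
    (ρ X : Matrix n n ℂ) (hρ : ρ.PosDef) (hρtr : ρ.trace = 1)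
    (hX : X.PosSemidef) (hX0 : X ≠ 0)
    (J : Set ℝ) (hJopen : IsOpen J) (hJconn : J.OrdConnected) (h0J : (0 : ℝ) ∉ J)
    (f g : ℝ → ℝ)
    (hf : ∀ x ∈ J, DifferentiableAt ℝ f x)
    (hg : ∀ x ∈ J, DifferentiableAt ℝ g x)
    (hgeq : ∀ x ∈ J, x * deriv g x = g x)
    (hfeq : ∀ x ∈ J, x * deriv f x * g x = -1) :
    MonotoneOn (fun x : ℝ =>
      (1 / x) * Real.log ((Matrix.trace (matPow (X * matPow ρ (f x) * X) (g x))).re)) J := by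
  have hx0 : ∀ x ∈ J, x ≠ 0 := fun x hx h => h0J (h ▸ hx)
  have hg0 : ∀ x ∈ J, g x ≠ 0 := by
    intro x hx h
    have := hfeq x hx
    rw [h, mul_zero] at this
    norm_num at this
  have hpre : IsPreconnected J := hJconn.isPreconnected
  have hc : ∀ x ∈ J, HasDerivAt (fun x => g x / x) 0 x := by
    intro x hx
    have := (hg x hx).hasDerivAt.div (hasDerivAt_id x) (hx0 x hx)
    refine this.congr_deriv ?_
    have h2 := hgeq x hx
    simp only [id]
    rw [div_eq_zero_iff]
    left
    linarith
  have hd : ∀ x ∈ J, HasDerivAt (fun x => f x - (g x)⁻¹) 0 x := by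
    intro x hx
    have := (hf x hx).hasDerivAt.sub ((hg x hx).hasDerivAt.inv (hg0 x hx))
    refine this.congr_deriv ?_
    have h2 := hgeq x hx
    have h3 := hfeq x hx
    have h4 := hx0 x hx
    have h5 := hg0 x hx
    have e : x * (deriv f x - -deriv g x / g x ^ 2) * g x = 0 := by
      have : x * (deriv f x - -deriv g x / g x ^ 2) * g x =
        x * deriv f x * g x + x * deriv g x / g x := by field_simp; ring
      rw [this, h3, h2, div_self h5]; norm_num
    simpa [h4, h5] using e
  intro x hx y hy hxy
  obtain ⟨c, hc'⟩ := hJopen.exists_is_const_of_deriv_eq_zero hpre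
    (fun x hx => (hc x hx).differentiableAt.differentiableWithinAt) (fun x hx => (hc x hx).deriv)
  obtain ⟨d, hd'⟩ := hJopen.exists_is_const_of_deriv_eq_zero hpre
    (fun x hx => (hd x hx).differentiableAt.differentiableWithinAt) (fun x hx => (hd x hx).deriv)
  have hgx : ∀ z ∈ J, g z = c * z := fun z hz => by
    have := hc' z hz
    rwa [div_eq_iff (hx0 z hz)] at this
  have hfx : ∀ z ∈ J, f z = d + (c * z)⁻¹ := fun z hz => by
    have := hd' z hz
    simp only [hgx z hz] at this
    linarith
  have hcne : c ≠ 0 := by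
    intro h
    apply hg0 x hx
    rw [hgx x hx, h, zero_mul]
  have hsign : 0 < x ∨ y < 0 := by
    by_contra hcon
    push Not at hcon
    exact h0J (hJconn.out hx hy ⟨hcon.1, hcon.2⟩)
  have form : ∀ z ∈ J, (1 / z) * Real.log ((Matrix.trace (matPow (X * matPow ρ (f z) * X)
      (g z))).re) = c * ((c * z)⁻¹ * Real.log ((Matrix.trace (matPow (X * matPow ρ
        (d + (c * z)⁻¹) * X) (1 / (c * z)⁻¹))).re)) := by
    intro z hz
    rw [hfx z hz, hgx z hz, one_div (c * z)⁻¹, inv_inv, ← mul_assoc]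
    congr 1
    have := hx0 z hz
    field_simp
  show (1 / x) * _ ≤ (1 / y) * _
  rw [form x hx, form y hy]
  have hinv : y⁻¹ ≤ x⁻¹ := by
    rcases hsign with h | h
    · exact inv_anti₀ h hxy
    · exact (inv_le_inv_of_neg h (lt_of_le_of_lt hxy h)).2 hxy
  have hinvs : 0 < y⁻¹ ∨ x⁻¹ < 0 := by
    rcases hsign with h | h
    · left; exact inv_pos.2 (lt_of_lt_of_le h hxy)
    · right; exact inv_lt_zero.2 (lt_of_le_of_lt hxy h)
  have ex : (c * x)⁻¹ = c⁻¹ * x⁻¹ := mul_inv _ _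
  have ey : (c * y)⁻¹ = c⁻¹ * y⁻¹ := mul_inv _ _
  rcases lt_or_gt_of_ne hcne with hcn | hcp
  · have hci : c⁻¹ < 0 := inv_lt_zero.2 hcn
    refine mul_le_mul_of_nonpos_left ?_ hcn.le
    refine h18_anti ρ X hρ hρtr hX hX0 d _ _ ?_ ?_
    · rw [ex, ey]
      rcases hinvs with h | h
      · right; exact mul_neg_of_neg_of_pos hci h
      · left; exact mul_pos_of_neg_of_neg hci h
    · rw [ex, ey]
      exact mul_le_mul_of_nonpos_left hinv hci.le
  · have hci : 0 < c⁻¹ := inv_pos.2 hcp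
    refine mul_le_mul_of_nonneg_left ?_ hcp.le
    refine h18_anti ρ X hρ hρtr hX hX0 d _ _ ?_ ?_
    · rw [ex, ey]
      rcases hinvs with h | h
      · left; exact mul_pos hci h
      · right; exact mul_neg_of_pos_of_neg hci h
    · rw [ex, ey]
      exact mul_le_mul_of_nonneg_left hinv hci.le
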